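/- arXiv:2210.04487 — 5 statements merged into one kernel-verified Lean document; each statement's English description precedes it below -/
import Mathlib

section
/- Let F₄ = GF(4), let n ≥ 1, and let g₁, g₂ be monic divisors of Xⁿ−1 in F₄[X]. Let f, a, b ∈ F₄[X] and suppose f−1 and Xⁿ−1 are coprime in F₄[X]. If (Xⁿ−1) divides a·g₁·f − b·g₂ and (Xⁿ−1) divides a·g₁ − b·g₂·f, then (Xⁿ−1) divides a·g₁ and (Xⁿ−1) divides b·g₂. -/
open Polynomial

set_option synthInstance.maxHeartbeats 1000000
set_option maxHeartbeats 1000000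

noncomputable section

/-- The field `F₄ = GF(4)`. -/
abbrev F4 : Type := GaloisField 2 2

/-- The coefficient vector `[p]ₙ ∈ F₄ⁿ` of the remainder of `p` modulo `Xⁿ - 1`
(coefficient of `X^i` in position `i`). -/
def coeffVec (n : ℕ) (p : Polynomial F4) : Fin n → F4 :=
  fun i => (p % (X ^ n - 1)).coeff i

/-- The Hermitian inner product `⟨u,v⟩_h = ∑ i, u i * (v i)²` on `F₄^m`. -/
def hermInner {m : ℕ} (u v : Fin m → F4) : F4 := ∑ i, u i * (v i) ^ 2

/-- The Hermitian inner product on `F₄ⁿ × F₄ⁿ`: the sum of the Hermitian inner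
products of the two components. -/
def hermInner2 {n : ℕ} (u v : (Fin n → F4) × (Fin n → F4)) : F4 :=
  hermInner u.1 v.1 + hermInner u.2 v.2

/-- The conjugate transform `f̄ := f₀² + ∑_{i=1}^{n-1} f_i² X^{n-i}`, where `f` is first
reduced modulo `Xⁿ - 1`. -/
def conjT (n : ℕ) (f : Polynomial F4) : Polynomial F4 :=
  C (((f % (X ^ n - 1)).coeff 0) ^ 2) +
    ∑ i ∈ Finset.Ico 1 n, C (((f % (X ^ n - 1)).coeff i) ^ 2) * X ^ (n - i)

/-- The Hermitian dual generator `g^{⊥h}(X) := ∑_{j=0}^{deg h} (h_j)² X^{deg h - j}`,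
the conjugate reciprocal of the check polynomial `h = (Xⁿ-1)/g`. -/
def dualGen (n : ℕ) (g : Polynomial F4) : Polynomial F4 :=
  ∑ j ∈ Finset.range (((X ^ n - 1) / g).natDegree + 1),
    C ((((X ^ n - 1) / g).coeff j) ^ 2) * X ^ (((X ^ n - 1) / g).natDegree - j)

lemma hermInner_add_right {m : ℕ} (u v w : Fin m → F4) :
    hermInner u (v + w) = hermInner u v + hermInner u w := by
  simp only [hermInner, Pi.add_apply]
  rw [← Finset.sum_add_distrib]
  refine Finset.sum_congr rfl fun i _ => ?_
  rw [add_pow_char (v i) (w i) 2, mul_add]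

lemma hermInner_smul_right {m : ℕ} (c : F4) (u v : Fin m → F4) :
    hermInner u (c • v) = c ^ 2 * hermInner u v := by
  simp only [hermInner, Pi.smul_apply, smul_eq_mul, mul_pow, Finset.mul_sum]
  exact Finset.sum_congr rfl fun i _ => by ring

/-- The Hermitian dual code `C^{⊥h} = {v | ∀ u ∈ C, ⟨u,v⟩_h = 0}` of a linear code in `F₄^m`. -/
def hermDual {m : ℕ} (Ccode : Submodule F4 (Fin m → F4)) : Submodule F4 (Fin m → F4) where
  carrier := {v | ∀ u ∈ Ccode, hermInner u v = 0}
  zero_mem' := by intro u _; simp [hermInner]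
  add_mem' := by
    intro v w hv hw u hu
    rw [hermInner_add_right, hv u hu, hw u hu, add_zero]
  smul_mem' := by
    intro c v hv u hu
    rw [hermInner_smul_right, hv u hu, mul_zero]

lemma hermInner2_add_right {n : ℕ} (u v w : (Fin n → F4) × (Fin n → F4)) :
    hermInner2 u (v + w) = hermInner2 u v + hermInner2 u w := by
  simp only [hermInner2, Prod.fst_add, Prod.snd_add, hermInner_add_right]
  ring

lemma hermInner2_smul_right {n : ℕ} (c : F4) (u v : (Fin n → F4) × (Fin n → F4)) :
    hermInner2 u (c • v) = c ^ 2 * hermInner2 u v := by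
  simp only [hermInner2, Prod.smul_fst, Prod.smul_snd, hermInner_smul_right]
  ring

/-- The Hermitian dual code of a linear code in `F₄ⁿ × F₄ⁿ` (identified with `F₄^{2n}`). -/
def hermDualPair {n : ℕ} (Ccode : Submodule F4 ((Fin n → F4) × (Fin n → F4))) :
    Submodule F4 ((Fin n → F4) × (Fin n → F4)) where
  carrier := {v | ∀ u ∈ Ccode, hermInner2 u v = 0}
  zero_mem' := by intro u _; simp [hermInner2, hermInner]
  add_mem' := by
    intro v w hv hw u hu
    rw [hermInner2_add_right, hv u hu, hw u hu, add_zero]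
  smul_mem' := by
    intro c v hv u hu
    rw [hermInner2_smul_right, hv u hu, mul_zero]

/-- Hamming weight of a vector. -/
def hammingWt {m : ℕ} (u : Fin m → F4) : ℕ := Nat.card {i : Fin m // u i ≠ 0}

/-- The 2-generator quasi-cyclic code `C(g₁,g₂,ν)` of length `2n` and index 2:
the `F₄`-span of all `([a·ν·g₁]ₙ, [a·g₁]ₙ)` and `([b·g₂]ₙ, [b·ν·g₂]ₙ)`. -/
def Cqc (n : ℕ) (g₁ g₂ ν : Polynomial F4) : Submodule F4 ((Fin n → F4) × (Fin n → F4)) :=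
  Submodule.span F4
    ({x | ∃ a : Polynomial F4, x = (coeffVec n (a * ν * g₁), coeffVec n (a * g₁))} ∪
     {x | ∃ b : Polynomial F4, x = (coeffVec n (b * g₂), coeffVec n (b * ν * g₂))})

/-- The quasi-cyclic code `D`: the `F₄`-span of all `([-ν̄·c·g₁^{⊥h}]ₙ, [c·g₁^{⊥h}]ₙ)`
and `([s·g₂^{⊥h}]ₙ, [-ν̄·s·g₂^{⊥h}]ₙ)`. -/
def Dqc (n : ℕ) (g₁ g₂ ν : Polynomial F4) : Submodule F4 ((Fin n → F4) × (Fin n → F4)) :=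
  Submodule.span F4
    ({x | ∃ c : Polynomial F4,
        x = (coeffVec n (-(conjT n ν) * c * dualGen n g₁), coeffVec n (c * dualGen n g₁))} ∪
     {x | ∃ s : Polynomial F4,
        x = (coeffVec n (s * dualGen n g₂), coeffVec n (-(conjT n ν) * s * dualGen n g₂))})

/-- The quotient ring `R = F₄[X]/(Xⁿ - 1)`. -/
abbrev Rng (n : ℕ) : Type := Polynomial F4 ⧸ Ideal.span ({X ^ n - 1} : Set (Polynomial F4))

/-- The natural projection `F₄[X] → R`. -/
def toRng (n : ℕ) : Polynomial F4 →+* Rng n := Ideal.Quotient.mk _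

/-- The `R`-linear map `R → R × R`, `a ↦ (a·û, a·v̂)`, where `û, v̂` are the images of
`u, v` in `R`. -/
def qcMap (n : ℕ) (u v : Polynomial F4) : Rng n →ₗ[Rng n] Rng n × Rng n :=
  (LinearMap.toSpanSingleton (Rng n) (Rng n) (toRng n u)).prod
    (LinearMap.toSpanSingleton (Rng n) (Rng n) (toRng n v))

section CommRing

variable {R : Type*} [CommRing R] {m f u v : R}

theorem dvd_sub_one_mul_add_one_mul_of_dvd_sub (h₁ : m ∣ u * f - v) (h₂ : m ∣ u - v * f) :
    m ∣ (f - 1) * (f + 1) * u := by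
  have eliminate_v : (u * f - v) * f - (u - v * f) = (f - 1) * (f + 1) * u := by ring
  exact eliminate_v ▸ dvd_sub (h₁.mul_right f) h₂

theorem key_divisibility_step_general
    (hsub : IsCoprime (f - 1) m) (hadd : IsCoprime (f + 1) m)
    (h₁ : m ∣ u * f - v) (h₂ : m ∣ u - v * f) :
    m ∣ u ∧ m ∣ v := by
  have hu : m ∣ u := (hsub.mul_left hadd).symm.dvd_of_dvd_mul_left
    (dvd_sub_one_mul_add_one_mul_of_dvd_sub h₁ h₂)
  exact ⟨hu, (dvd_sub_right (hu.mul_right f)).mp h₁⟩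

end CommRing

/-- If `f - 1` is coprime to `Xⁿ - 1`, and `Xⁿ - 1` divides both `a·g₁·f - b·g₂` and
`a·g₁ - b·g₂·f`, then `Xⁿ - 1` divides `a·g₁` and `b·g₂`. -/
theorem key_divisibility_step (n : ℕ) (hn : 1 ≤ n) (g₁ g₂ f a b : Polynomial F4)
    (hg₁m : g₁.Monic) (hg₁d : g₁ ∣ X ^ n - 1)
    (hg₂m : g₂.Monic) (hg₂d : g₂ ∣ X ^ n - 1)
    (hcop : IsCoprime (f - 1) (X ^ n - 1))
    (h1 : (X ^ n - 1) ∣ a * g₁ * f - b * g₂)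
    (h2 : (X ^ n - 1) ∣ a * g₁ - b * g₂ * f) :
    (X ^ n - 1) ∣ a * g₁ ∧ (X ^ n - 1) ∣ b * g₂ :=
  key_divisibility_step_general hcop (CharTwo.sub_eq_add f 1 ▸ hcop) h1 h2

end
end

section
/- Let F₄ = GF(4), n ≥ 1, and let R = F₄[X]/(Xⁿ−1). Let g₁, g₂ be monic divisors of Xⁿ−1 and ν ∈ F₄[X], and suppose ν−1 and Xⁿ−1 are coprime in F₄[X]. Let φ₁ : R → R × R be the R-linear map a ↦ (a·ν̂·ĝ₁, a·ĝ₁) and φ₂ : R → R × R the map b ↦ (b·ĝ₂, b·ν̂·ĝ₂), where ĝ₁, ĝ₂, ν̂ denote the images of g₁, g₂, ν in R. Then (range φ₁) ⊓ (range φ₂) = ⊥, i.e., the two 1-generator quasi-cyclic codes intersect only in the zero codeword. -/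
open Polynomial

set_option synthInstance.maxHeartbeats 1000000
set_option maxHeartbeats 1000000

noncomputable section

theorem isUnit_map_of_isCoprime {A B : Type*} [CommSemiring A] [CommSemiring B] (f : A →+* B)
    {a m : A} (hm : f m = 0) (h : IsCoprime a m) : IsUnit (f a) :=
  isCoprime_zero_right.mp (hm ▸ h.map f)

theorem isCoprime_sq_sub_one_iff {A : Type*} [CommRing A] [CharP A 2] {a m : A} :
    IsCoprime (a ^ 2 - 1) m ↔ IsCoprime (a - 1) m := by
  have hsq : a ^ 2 - 1 = (a - 1) ^ 2 := by rw [sub_pow_char, one_pow]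
  rw [hsq, IsCoprime.pow_left_iff two_pos]

theorem toRng_X_pow_sub_one (n : ℕ) : toRng n (X ^ n - 1) = 0 :=
  Ideal.Quotient.mk_singleton_self _

theorem isUnit_toRng_sq_sub_one {n : ℕ} {ν : F4[X]} (hcop : IsCoprime (ν - 1) (X ^ n - 1)) :
    IsUnit (toRng n ν ^ 2 - 1) := by
  simpa only [map_sub, map_pow, map_one] using
    isUnit_map_of_isCoprime (toRng n) (toRng_X_pow_sub_one n) (isCoprime_sq_sub_one_iff.mpr hcop)

theorem eq_zero_of_eq_smul_of_eq_smul {R M : Type*} [Ring R] [AddCommGroup M] [Module R M] {v : R}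
    (hv : IsSMulRegular M (v ^ 2 - 1)) {x y : M} (hx : x = v • y) (hy : y = v • x) : x = 0 := by
  have hfix : v ^ 2 • x = x := by rw [sq, mul_smul, ← hy, ← hx]
  exact hv.right_eq_zero_of_smul (by rw [sub_smul, one_smul, hfix, sub_self])

/-- The paper's case is `M = R = F₄[X]/(Xⁿ - 1)` and `v = ν̂`; there the characteristic is two, so
`v ^ 2 - 1 = (v - 1) ^ 2`. -/
theorem qc_ranges_inf_eq_bot_general {R M : Type*} [CommRing R] [AddCommGroup M] [Module R M]
    {v : R} (hv : IsSMulRegular M (v ^ 2 - 1)) (m₁ m₂ : M) :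
    LinearMap.range ((LinearMap.toSpanSingleton R M (v • m₁)).prod
        (LinearMap.toSpanSingleton R M m₁)) ⊓
      LinearMap.range ((LinearMap.toSpanSingleton R M m₂).prod
        (LinearMap.toSpanSingleton R M (v • m₂))) = ⊥ := by
  rw [eq_bot_iff]
  rintro ⟨x, y⟩ ⟨⟨a, ha⟩, ⟨b, hb⟩⟩
  obtain ⟨rfl, rfl⟩ : a • v • m₁ = x ∧ a • m₁ = y := Prod.mk.inj ha
  obtain ⟨hbx, hby⟩ : b • m₂ = a • v • m₁ ∧ b • v • m₂ = a • m₁ := Prod.mk.inj hb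
  have hx : a • v • m₁ = v • a • m₁ := smul_comm a v m₁
  have hy : a • m₁ = v • a • v • m₁ := by rw [← hbx, ← hby, smul_comm]
  exact (Submodule.mem_bot R).mpr <| Prod.ext
    (eq_zero_of_eq_smul_of_eq_smul hv hx hy) (eq_zero_of_eq_smul_of_eq_smul hv hy hx)

/-- The two 1-generator quasi-cyclic codes `range φ₁` and `range φ₂` intersect only in
the zero codeword. -/
theorem qc_ranges_inf_eq_bot (n : ℕ) (hn : 1 ≤ n) (g₁ g₂ ν : Polynomial F4)
    (hg₁m : g₁.Monic) (hg₁d : g₁ ∣ X ^ n - 1)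
    (hg₂m : g₂.Monic) (hg₂d : g₂ ∣ X ^ n - 1)
    (hcop : IsCoprime (ν - 1) (X ^ n - 1)) :
    LinearMap.range (qcMap n (ν * g₁) g₁) ⊓ LinearMap.range (qcMap n g₂ (ν * g₂)) = ⊥ := by
  simp only [qcMap, map_mul]
  exact qc_ranges_inf_eq_bot_general ((isUnit_toRng_sq_sub_one hcop).isSMulRegular (Rng n)) _ _

end
end

section
/- Let F₄ = GF(4), n ≥ 1, and let R = F₄[X]/(Xⁿ−1). Let g₁, g₂ be monic divisors of Xⁿ−1 and ν ∈ F₄[X], and suppose ν−1 and Xⁿ−1 are coprime in F₄[X]. Let φ₁ : R → R × R be a ↦ (a·ν̂·ĝ₁, a·ĝ₁) and φ₂ : R → R × R be b ↦ (b·ĝ₂, b·ν̂·ĝ₂), where ĝ₁, ĝ₂, ν̂ are the images of g₁, g₂, ν in R. Then the F₄-dimension of the submodule (range φ₁) ⊔ (range φ₂) of R × R equals 2n − deg g₁ − deg g₂. -/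
open Polynomial

set_option synthInstance.maxHeartbeats 1000000
set_option maxHeartbeats 1000000

noncomputable section

/-!
The `2 × 2` matrix over `R` with columns `(ν, 1)` and `(1, ν)` carries the product `⟨ĝ₁⟩ × ⟨ĝ₂⟩` of
cyclic codes onto the quasi-cyclic code. In characteristic `2` its determinant is
`ν² - 1 = (ν - 1)²`, a unit of `R`, so the dimension is preserved; and `⟨ĝ⟩` has codimension `deg g`
because `R/⟨ĝ⟩ ≃ F₄[X]/(g)`.
-/

section Submodule

variable {K A M N : Type*} [Ring K] [StrongRankCondition K] [Semiring A] [SMul K A]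
  [AddCommGroup M] [Module K M] [Module A M] [IsScalarTower K A M]
  [AddCommGroup N] [Module K N] [Module A N] [IsScalarTower K A N]

lemma finrank_submodule_prod (p : Submodule A M) (q : Submodule A N)
    [Module.Free K p] [Module.Finite K p] [Module.Free K q] [Module.Finite K q] :
    Module.finrank K (p.prod q) = Module.finrank K p + Module.finrank K q :=
  let e : p.prod q ≃ₗ[K] p × q :=
    { AddSubmonoid.prodEquiv p.toAddSubmonoid q.toAddSubmonoid with map_smul' := fun _ _ => rfl }
  e.finrank_eq.trans Module.finrank_prod

end Submodule

section CommRing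

variable {A : Type*} [CommRing A]

lemma map_toLin_finTwoProd_span_prod_span (a b c d x y : A) :
    ((Submodule.span A {x}).prod (Submodule.span A {y})).map
        (Matrix.toLin (.finTwoProd A) (.finTwoProd A) !![a, c; b, d]) =
      Submodule.span A {(a * x, b * x)} ⊔ Submodule.span A {(c * y, d * y)} := by
  simp only [LinearMap.prod_eq_sup_map, Submodule.map_sup, Submodule.map_span,
    Set.image_singleton, LinearMap.inl_apply, LinearMap.inr_apply, Matrix.toLin_finTwoProd_apply,
    mul_zero, add_zero, zero_add]

lemma finrank_span_sup_span_of_isUnit_det (K : Type*) [Field K] [Algebra K A] [Module.Finite K A]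
    {a b c d : A} (h : IsUnit (a * d - b * c)) (x y : A) :
    Module.finrank K ↥(Submodule.span A {(a * x, b * x)} ⊔ Submodule.span A {(c * y, d * y)}) =
      Module.finrank K (Ideal.span {x}) + Module.finrank K (Ideal.span {y}) := by
  have hdet : IsUnit (!![a, c; b, d]).det := by
    rwa [Matrix.det_fin_two_of, mul_comm c b]
  let T : (A × A) ≃ₗ[A] A × A := Matrix.toLinearEquiv (.finTwoProd A) _ hdet
  let I : Submodule A (A × A) := (Submodule.span A {x}).prod (Submodule.span A {y})
  rw [← map_toLin_finTwoProd_span_prod_span]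
  have hT : Module.finrank K I = Module.finrank K (I.map (T : (A × A) →ₗ[A] A × A)) :=
    ((T.submoduleMap I).restrictScalars K).finrank_eq
  exact hT.symm.trans (finrank_submodule_prod _ _)

lemma isCoprime_mul_self_sub_one [CharP A 2] {x y : A} (h : IsCoprime (x - 1) y) :
    IsCoprime (x * x - 1) y := by
  rw [mul_self_sub_one, ← CharTwo.sub_eq_add]
  exact h.mul_left h

lemma isUnit_adjoinRoot_mk {f p : A[X]} (h : IsCoprime p f) : IsUnit (AdjoinRoot.mk f p) := by
  rw [← isCoprime_zero_right, ← AdjoinRoot.mk_self]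
  exact h.map _

end CommRing

section Field

variable {K : Type*} [Field K] {f : K[X]}

lemma finrank_adjoinRoot_quotient_span_mk {g : K[X]} (hg : g ∣ f) :
    Module.finrank K (AdjoinRoot f ⧸ Ideal.span {AdjoinRoot.mk f g}) = g.natDegree := by
  have hle : Ideal.span {f} ≤ Ideal.span {g} := Ideal.span_singleton_le_span_singleton.2 hg
  have h := (DoubleQuot.quotQuotEquivQuotOfLEₐ K hle).toLinearEquiv.finrank_eq
  rwa [finrank_quotient_span_eq_natDegree, Ideal.map_span, Set.image_singleton] at h

lemma finrank_span_adjoinRoot_mk_add_natDegree {g : K[X]} (hf : f ≠ 0) (hg : g ∣ f) :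
    Module.finrank K (Ideal.span {AdjoinRoot.mk f g}) + g.natDegree = f.natDegree := by
  have := (AdjoinRoot.powerBasis hf).finite
  rw [add_comm, ← finrank_adjoinRoot_quotient_span_mk hg,
    ← finrank_quotient_span_eq_natDegree (f := f)]
  exact ((Ideal.span {AdjoinRoot.mk f g}).restrictScalars K).finrank_quotient_add_finrank

open AdjoinRoot in
theorem qc_code_finrank_general {g₁ g₂ a b c d : K[X]} (hf : f ≠ 0) (hg₁ : g₁ ∣ f) (hg₂ : g₂ ∣ f)
    (hdet : IsCoprime (a * d - b * c) f) :
    Module.finrank K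
      ↥(Submodule.span (AdjoinRoot f) {(mk f (a * g₁), mk f (b * g₁))} ⊔
        Submodule.span (AdjoinRoot f) {(mk f (c * g₂), mk f (d * g₂))}) =
      2 * f.natDegree - g₁.natDegree - g₂.natDegree := by
  have := (powerBasis hf).finite
  have hunit : IsUnit (mk f a * mk f d - mk f b * mk f c) := by
    simpa only [map_sub, map_mul] using isUnit_adjoinRoot_mk hdet
  rw [map_mul, map_mul, map_mul, map_mul, finrank_span_sup_span_of_isUnit_det K hunit]
  have h₁ := finrank_span_adjoinRoot_mk_add_natDegree hf hg₁
  have h₂ := finrank_span_adjoinRoot_mk_add_natDegree hf hg₂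
  omega

end Field

lemma range_qcMap (n : ℕ) (u v : F4[X]) :
    LinearMap.range (qcMap n u v) = Submodule.span (Rng n) {(toRng n u, toRng n v)} := by
  rw [← LinearMap.range_toSpanSingleton]
  rfl

/-- The `F₄`-dimension of the 2-generator quasi-cyclic code `range φ₁ ⊔ range φ₂` equals
`2n - deg g₁ - deg g₂`. -/
theorem qc_code_finrank (n : ℕ) (hn : 1 ≤ n) (g₁ g₂ ν : Polynomial F4)
    (hg₁m : g₁.Monic) (hg₁d : g₁ ∣ X ^ n - 1)
    (hg₂m : g₂.Monic) (hg₂d : g₂ ∣ X ^ n - 1)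
    (hcop : IsCoprime (ν - 1) (X ^ n - 1)) :
    Module.finrank F4
      ↥(Submodule.restrictScalars F4
        (LinearMap.range (qcMap n (ν * g₁) g₁) ⊔ LinearMap.range (qcMap n g₂ (ν * g₂)))) =
      2 * n - g₁.natDegree - g₂.natDegree := by
  have hdet : IsCoprime (ν * ν - 1 * 1) (X ^ n - 1) := by
    simpa only [one_mul] using isCoprime_mul_self_sub_one hcop
  have h := qc_code_finrank_general (X_pow_sub_C_ne_zero hn 1) hg₁d hg₂d hdet
  rw [natDegree_X_pow_sub_C, one_mul, one_mul] at h
  rw [range_qcMap, range_qcMap]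
  -- `Rng n` and `AdjoinRoot (X ^ n - 1)` are definitionally equal.
  exact h

end
end

section
/- Let F₄ = GF(4), let n be odd, and let g₁, g₂ be monic divisors of Xⁿ−1 in F₄[X] with check polynomials h₁ = (Xⁿ−1)/g₁ and h₂ = (Xⁿ−1)/g₂. Then the following are equivalent: (i) for all a, b ∈ F₄[X], ⟨[a·g₁]ₙ, [b·g₂]ₙ⟩_h = 0; (ii) g₂^{⊥h} divides g₁ and g₁^{⊥h} divides g₂ in F₄[X]. -/
open Polynomial

set_option synthInstance.maxHeartbeats 1000000
set_option maxHeartbeats 1000000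

noncomputable section

/-!
The functional `p ↦ (p %ₘ (Xⁿ - 1)).coeff (n - 1)` vanishes on no nonzero ideal of
`R[X]/(Xⁿ - 1)`, and the dot product of the coefficient vectors of `p` and `q` is its value at
`p` times the reflection of `q`. Up to powers of the unit `X`, reflection is the substitution
`X ↦ X⁻¹`. Hence `p` is orthogonal, together with all its multiples, to `q` exactly when `Xⁿ - 1`
divides `p` times the reciprocal of `q`. For `q` the conjugate of a divisor `g`, the reciprocals of
`q` and of the conjugate check polynomial multiply to `-(Xⁿ - 1)`, so cancelling that of `q` leaves
`g^{⊥h} ∣ p`. The second divisibility follows by conjugate symmetry of the inner product.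
-/

section Semiring

variable {R : Type*} [Semiring R]

lemma reverse_mul_of_monic_right (p : R[X]) {q : R[X]} (hq : q.Monic) :
    (p * q).reverse = p.reverse * q.reverse := by
  rcases eq_or_ne p 0 with rfl | hp
  · simp
  · exact reverse_mul (by simpa [hq.leadingCoeff] using hp)

lemma reflect_eq_sum_range {N : ℕ} {p : R[X]} (hp : p.natDegree ≤ N) :
    reflect N p = ∑ j ∈ Finset.range (N + 1), C (p.coeff j) * X ^ (N - j) := by
  rw [as_sum_range_C_mul_X_pow' (reflect N p) (n := N + 1)
    (Nat.lt_succ_of_le (by simpa [hp] using natDegree_reflect_le (N := N) (p := p))),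
    ← Finset.sum_range_reflect]
  refine Finset.sum_congr rfl fun j hj => ?_
  have hjN : j ≤ N := Nat.lt_succ_iff.1 (Finset.mem_range.1 hj)
  rw [Nat.add_sub_cancel, coeff_reflect, revAt_le (Nat.sub_le N j), Nat.sub_sub_self hjN]

lemma coeff_mul_reflect (N : ℕ) (p q : R[X]) :
    (p * reflect N q).coeff N = ∑ i ∈ Finset.range (N + 1), p.coeff i * q.coeff i := by
  rw [coeff_mul, Finset.Nat.sum_antidiagonal_eq_sum_range_succ
    (fun i j => p.coeff i * (reflect N q).coeff j)]
  refine Finset.sum_congr rfl fun i hi => ?_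
  have hiN : i ≤ N := Nat.lt_succ_iff.1 (Finset.mem_range.1 hi)
  rw [coeff_reflect, revAt_le (Nat.sub_le N i), Nat.sub_sub_self hiN]

end Semiring

section CommSemiring

variable {R S : Type*} [CommSemiring R] [CommSemiring S]

lemma associated_aeval_reflect [Algebra R S] {x y : S} (hxy : x * y = 1) {N : ℕ} {p : R[X]}
    (hp : p.natDegree ≤ N) : Associated (aeval x (reflect N p)) (aeval y p) := by
  let _ : Invertible y := ⟨x, hxy, by rw [mul_comm, hxy]⟩
  exact ⟨(unitOfInvertible y) ^ N, eval₂_reflect_mul_pow (algebraMap R S) y N p hp⟩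

lemma dotProduct_conj_comm {ι : Type*} [Fintype ι] {σ : R →+* R} (hσ : Function.Involutive σ)
    (u v : ι → R) : u ⬝ᵥ (σ ∘ v) = σ (v ⬝ᵥ (σ ∘ u)) := by
  rw [RingHom.map_dotProduct, ← Function.comp_assoc, hσ.comp_self, Function.id_comp,
    dotProduct_comm]

end CommSemiring

section Ring

variable {R S : Type*} [Ring R] [Ring S]

lemma monic_X_pow_sub_one {n : ℕ} (hn : n ≠ 0) : (X ^ n - 1 : R[X]).Monic := by
  simpa using monic_X_pow_sub_C (1 : R) hn

lemma natDegree_X_pow_sub_one [Nontrivial R] (n : ℕ) : (X ^ n - 1 : R[X]).natDegree = n := by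
  simpa using natDegree_X_pow_sub_C (R := R) (n := n) (r := 1)

lemma reverse_X_pow_sub_one (n : ℕ) : (X ^ n - 1 : R[X]).reverse = -(X ^ n - 1) := by
  nontriviality R
  rw [reverse, natDegree_X_pow_sub_one, reflect_sub, reflect_monomial, revAt_le le_rfl,
    reflect_one, Nat.sub_self, pow_zero, neg_sub]

lemma coeff_modByMonic_X_pow_sub_one {n i : ℕ} {p : R[X]} (hi : i < n)
    (hp : p.natDegree < n + i) : (p %ₘ (X ^ n - 1)).coeff i = p.coeff i := by
  nontriviality R
  have hm : (X ^ n - 1 : R[X]).Monic := monic_X_pow_sub_one (by omega)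
  rcases lt_or_ge p.natDegree n with hlt | hge
  · rw [(modByMonic_eq_self_iff hm).2]
    exact degree_lt_degree (by rwa [natDegree_X_pow_sub_one])
  · have hquot : (p /ₘ (X ^ n - 1)).coeff i = 0 := by
      apply coeff_eq_zero_of_natDegree_lt
      rw [natDegree_divByMonic p hm, natDegree_X_pow_sub_one]
      omega
    conv_rhs => rw [← modByMonic_add_div p (X ^ n - 1)]
    simp [sub_mul, coeff_X_pow_mul', hi.not_ge, hquot]

lemma natDegree_modByMonic_X_pow_sub_one_le {n : ℕ} (hn : n ≠ 0) (p : R[X]) :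
    (p %ₘ (X ^ n - 1)).natDegree ≤ n - 1 := by
  nontriviality R
  have hne : (X ^ n - 1 : R[X]) ≠ 1 := fun h =>
    hn (by rw [← natDegree_X_pow_sub_one (R := R) n, h, natDegree_one])
  have hlt := natDegree_modByMonic_lt p (monic_X_pow_sub_one hn) hne
  rw [natDegree_X_pow_sub_one] at hlt
  exact Nat.le_sub_one_of_lt hlt

/-- The coefficient vector in `Rⁿ` of the residue of `p` modulo `Xⁿ - 1`, for any ring `R`. -/
def cyclicCoeff (n : ℕ) (p : R[X]) : Fin n → R :=
  fun i => (p %ₘ (X ^ n - 1)).coeff i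

lemma cyclicCoeff_map (σ : R →+* S) (n : ℕ) (p : R[X]) :
    cyclicCoeff n (p.map σ) = σ ∘ cyclicCoeff n p := by
  ext i
  have hmap := map_modByMonic (p := p) σ (monic_X_pow_sub_one (R := R) i.pos.ne')
  simp only [Polynomial.map_sub, Polynomial.map_pow, map_X, Polynomial.map_one] at hmap
  simp only [cyclicCoeff, Function.comp_apply, ← hmap, coeff_map]

/-- The dual generator of `g` twisted by `σ`: the reciprocal of the `σ`-conjugate of the check
polynomial `(Xⁿ - 1)/g`, so that the Frobenius of `F₄` gives `g^{⊥h}`. The quotient is the monic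
division `/ₘ`, which returns `0` when `g` is not monic. -/
def conjDualGen (σ : R →+* S) (n : ℕ) (g : R[X]) : S[X] :=
  (((X ^ n - 1) /ₘ g).map σ).reverse

end Ring

section CommRing

variable {R S : Type*} [CommRing R] [CommRing S]

lemma mul_modByMonic_modByMonic (a p m : R[X]) : (a * (p %ₘ m)) %ₘ m = (a * p) %ₘ m := by
  by_cases hm : m.Monic
  · refine modByMonic_eq_of_dvd_sub hm ⟨-(a * (p /ₘ m)), ?_⟩
    rw [modByMonic_eq_sub_mul_div]
    ring
  · rw [modByMonic_eq_of_not_monic p hm]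

lemma dvd_iff_forall_coeff_mul_modByMonic {m : R[X]} (hm : m.Monic) (p : R[X]) :
    m ∣ p ↔ ∀ a : R[X], ((a * p) %ₘ m).coeff (m.natDegree - 1) = 0 := by
  nontriviality R
  refine ⟨fun h a => by rw [(modByMonic_eq_zero_iff_dvd hm).2 (h.mul_left a), coeff_zero],
    fun h => ?_⟩
  rw [← modByMonic_eq_zero_iff_dvd hm]
  by_contra hr
  set r := p %ₘ m with hr_def
  have hlt : r.natDegree < m.natDegree :=
    natDegree_modByMonic_lt p hm fun h1 => hr (by rw [hr_def, h1, modByMonic_one])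
  set k := m.natDegree - 1 - r.natDegree
  have hshift : (X ^ k * p) %ₘ m = X ^ k * r := by
    rw [← mul_modByMonic_modByMonic, modByMonic_eq_self_iff hm]
    refine degree_lt_degree ?_
    rw [natDegree_X_pow_mul k hr]
    omega
  have hlead := h (X ^ k)
  rw [hshift, show m.natDegree - 1 = r.natDegree + k by omega, coeff_X_pow_mul] at hlead
  exact hr (leadingCoeff_eq_zero.1 hlead)

/-- Reflecting `q` turns the dot product into a convolution, and the product has degree at most
`2n - 2`, so reduction modulo `Xⁿ - 1` does not touch its coefficient of index `n - 1`. -/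
lemma cyclicCoeff_dotProduct_cyclicCoeff {n : ℕ} (hn : n ≠ 0) (p q : R[X]) :
    cyclicCoeff n p ⬝ᵥ cyclicCoeff n q =
      ((p * reflect (n - 1) (q %ₘ (X ^ n - 1))) %ₘ (X ^ n - 1)).coeff (n - 1) := by
  have hp := natDegree_modByMonic_X_pow_sub_one_le hn p
  have hq := natDegree_modByMonic_X_pow_sub_one_le hn q
  rw [mul_comm p, ← mul_modByMonic_modByMonic, mul_comm _ (p %ₘ _)]
  unfold dotProduct cyclicCoeff
  generalize p %ₘ (X ^ n - 1) = r at hp ⊢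
  generalize q %ₘ (X ^ n - 1) = s at hq ⊢
  have hdeg : (r * reflect (n - 1) s).natDegree < n + (n - 1) := by
    have hs : (reflect (n - 1) s).natDegree ≤ n - 1 := by
      simpa [hq] using natDegree_reflect_le (N := n - 1) (p := s)
    have hmul := natDegree_mul_le (p := r) (q := reflect (n - 1) s)
    omega
  rw [coeff_modByMonic_X_pow_sub_one (by omega) hdeg, coeff_mul_reflect,
    Nat.sub_add_cancel (Nat.one_le_iff_ne_zero.2 hn)]
  exact Fin.sum_univ_eq_sum_range (fun i => r.coeff i * s.coeff i) n

/-- Both sides are, up to a power of the unit `X`, the value of `q` at `X⁻¹ = X ^ (n - 1)`. -/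
lemma associated_mk_reflect_modByMonic_mk_reverse {n : ℕ} (hn : n ≠ 0) (q : R[X]) :
    Associated (AdjoinRoot.mk (X ^ n - 1) (reflect (n - 1) (q %ₘ (X ^ n - 1))))
      (AdjoinRoot.mk (X ^ n - 1) q.reverse) := by
  set x := AdjoinRoot.root (X ^ n - 1 : R[X])
  have hxn : x ^ n = 1 := by
    have heval := AdjoinRoot.eval₂_root (X ^ n - 1 : R[X])
    rwa [eval₂_sub, eval₂_X_pow, eval₂_one, sub_eq_zero] at heval
  have hinv : x * x ^ (n - 1) = 1 := by rw [mul_pow_sub_one hn, hxn]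
  have hroot : aeval (x ^ (n - 1)) (X ^ n - 1 : R[X]) = 0 := by
    simp [pow_right_comm x (n - 1) n, hxn]
  have hreduced := associated_aeval_reflect hinv (natDegree_modByMonic_X_pow_sub_one_le hn q)
  rw [aeval_modByMonic_eq_self_of_root hroot] at hreduced
  simpa only [reverse, ← AdjoinRoot.aeval_eq] using
    hreduced.trans (associated_aeval_reflect hinv le_rfl).symm

lemma forall_cyclicCoeff_mul_dotProduct_eq_zero_iff {n : ℕ} (hn : n ≠ 0) (p q : R[X]) :
    (∀ a : R[X], cyclicCoeff n (a * p) ⬝ᵥ cyclicCoeff n q = 0) ↔ X ^ n - 1 ∣ p * q.reverse := by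
  nontriviality R
  have hm := monic_X_pow_sub_one (R := R) hn
  have hdvd := dvd_iff_forall_coeff_mul_modByMonic hm
    (p * reflect (n - 1) (q %ₘ (X ^ n - 1)))
  rw [natDegree_X_pow_sub_one] at hdvd
  simp only [cyclicCoeff_dotProduct_cyclicCoeff hn, mul_assoc, ← hdvd]
  rw [← AdjoinRoot.mk_eq_zero, ← AdjoinRoot.mk_eq_zero, map_mul, map_mul]
  exact ((associated_mk_reflect_modByMonic_mk_reverse hn q).mul_left _).eq_zero_iff

lemma conjDualGen_mul_reverse_map (σ : R →+* S) {n : ℕ} {g : R[X]} (hg : g.Monic)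
    (hgd : g ∣ X ^ n - 1) : conjDualGen σ n g * (g.map σ).reverse = -(X ^ n - 1) := by
  have hfactor : (X ^ n - 1) /ₘ g * g = X ^ n - 1 := by
    obtain ⟨h, hh⟩ := hgd
    rw [hh, mul_divByMonic_cancel_left h hg, mul_comm]
  rw [conjDualGen, ← reverse_mul_of_monic_right _ (hg.map σ), ← Polynomial.map_mul, hfactor]
  simpa using reverse_X_pow_sub_one (R := S) n

lemma X_pow_sub_one_dvd_mul_reverse_map_iff (σ : R →+* S) {n : ℕ} (hn : n ≠ 0) {g : R[X]}
    (hg : g.Monic) (hgd : g ∣ X ^ n - 1) (p : S[X]) :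
    X ^ n - 1 ∣ p * (g.map σ).reverse ↔ conjDualGen σ n g ∣ p := by
  have hprod := conjDualGen_mul_reverse_map σ hg hgd
  have hreg : IsRegular (g.map σ).reverse := by
    refine IsRegular.of_mul_right (a := -conjDualGen σ n g) ?_
    rw [neg_mul, hprod, neg_neg]
    exact (monic_X_pow_sub_one hn).isRegular
  rw [← neg_dvd, ← hprod, mul_comm _ (g.map σ).reverse, mul_comm p, hreg.left.dvd_cancel_left]

theorem forall_cyclicCoeff_conj_dotProduct_eq_zero_iff (σ : R →+* S) {n : ℕ} (hn : n ≠ 0)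
    (p : S[X]) {g : R[X]} (hg : g.Monic) (hgd : g ∣ X ^ n - 1) :
    (∀ (a : S[X]) (b : R[X]), cyclicCoeff n (a * p) ⬝ᵥ (σ ∘ cyclicCoeff n (b * g)) = 0) ↔
      conjDualGen σ n g ∣ p := by
  rw [← X_pow_sub_one_dvd_mul_reverse_map_iff σ hn hg hgd]
  simp only [← cyclicCoeff_map σ]
  rw [forall_comm]
  simp only [forall_cyclicCoeff_mul_dotProduct_eq_zero_iff hn]
  refine ⟨fun h => by simpa using h 1, fun h b => ?_⟩
  rw [Polynomial.map_mul, reverse_mul_of_monic_right _ (hg.map σ), mul_left_comm]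
  exact h.mul_left _

theorem herm_inner_zero_iff_dvd_general {σ : R →+* R} (hσ : Function.Involutive σ) {n : ℕ}
    (hn : n ≠ 0) {g₁ g₂ : R[X]} (hg₁m : g₁.Monic) (hg₁d : g₁ ∣ X ^ n - 1)
    (hg₂m : g₂.Monic) (hg₂d : g₂ ∣ X ^ n - 1) :
    (∀ a b : R[X], cyclicCoeff n (a * g₁) ⬝ᵥ (σ ∘ cyclicCoeff n (b * g₂)) = 0) ↔
      (conjDualGen σ n g₂ ∣ g₁ ∧ conjDualGen σ n g₁ ∣ g₂) := by
  have hiff₂ := forall_cyclicCoeff_conj_dotProduct_eq_zero_iff σ hn g₁ hg₂m hg₂d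
  have hiff₁ := forall_cyclicCoeff_conj_dotProduct_eq_zero_iff σ hn g₂ hg₁m hg₁d
  refine ⟨fun h => ⟨hiff₂.1 h, hiff₁.1 fun a b => ?_⟩, fun h => hiff₂.2 h.1⟩
  rw [dotProduct_conj_comm hσ, h, map_zero]

end CommRing

lemma frobenius_F4_involutive : Function.Involutive (frobenius F4 2) := by
  intro x
  let _ := Fintype.ofFinite F4
  have hcard : Fintype.card F4 = 2 ^ 2 := by
    rw [← Nat.card_eq_fintype_card, GaloisField.card 2 2 two_ne_zero]
  exact RingHom.congr_fun (FiniteField.frobenius_pow hcard) x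

lemma coeffVec_eq_cyclicCoeff (n : ℕ) (p : F4[X]) : coeffVec n p = cyclicCoeff n p := by
  ext i
  rw [coeffVec, cyclicCoeff, modByMonic_eq_mod p (monic_X_pow_sub_one i.pos.ne')]

lemma hermInner_eq_dotProduct {m : ℕ} (u v : Fin m → F4) :
    hermInner u v = u ⬝ᵥ (frobenius F4 2 ∘ v) :=
  rfl

lemma dualGen_eq_conjDualGen (n : ℕ) {g : F4[X]} (hg : g.Monic) :
    dualGen n g = conjDualGen (frobenius F4 2) n g := by
  rw [dualGen, conjDualGen, divByMonic_eq_div _ hg, reverse, reflect_eq_sum_range le_rfl]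
  simp only [natDegree_map, coeff_map, frobenius_def]

/-- For monic divisors `g₁, g₂` of `Xⁿ - 1` (`n` odd), all Hermitian inner products
`⟨[a·g₁]ₙ, [b·g₂]ₙ⟩_h` vanish iff `g₂^{⊥h} ∣ g₁` and `g₁^{⊥h} ∣ g₂`. -/
theorem herm_inner_zero_iff_dvd (n : ℕ) (hn : Odd n) (g₁ g₂ : Polynomial F4)
    (hg₁m : g₁.Monic) (hg₁d : g₁ ∣ X ^ n - 1)
    (hg₂m : g₂.Monic) (hg₂d : g₂ ∣ X ^ n - 1) :
    (∀ a b : Polynomial F4,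
        hermInner (coeffVec n (a * g₁)) (coeffVec n (b * g₂)) = 0) ↔
      (dualGen n g₂ ∣ g₁ ∧ dualGen n g₁ ∣ g₂) := by
  simpa only [hermInner_eq_dotProduct, coeffVec_eq_cyclicCoeff, dualGen_eq_conjDualGen n hg₁m,
    dualGen_eq_conjDualGen n hg₂m] using
    herm_inner_zero_iff_dvd_general frobenius_F4_involutive hn.pos.ne' hg₁m hg₁d hg₂m hg₂d

end
end

section
/- Let F₄ = GF(4), let n be odd, let g₁, g₂ be monic divisors of Xⁿ−1 in F₄[X], and let ν ∈ F₄[X]. For all c, s ∈ F₄[X], the Hermitian inner product in F₄^{2n} satisfies ⟨([−ν̄·c·g₁^{⊥h}]ₙ, [c·g₁^{⊥h}]ₙ), ([s·g₂^{⊥h}]ₙ, [−ν̄·s·g₂^{⊥h}]ₙ)⟩_h = −⟨[c·(ν+ν̄)·g₁^{⊥h}]ₙ, [s·g₂^{⊥h}]ₙ⟩_h, where the inner product of a pair in F₄ⁿ × F₄ⁿ is the sum of the Hermitian inner products of the two components. -/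
open Polynomial

set_option synthInstance.maxHeartbeats 1000000
set_option maxHeartbeats 1000000

noncomputable section

/-!
Writing `[p]ₙ` as a function on the cyclic group of residues modulo `n`, multiplication of
polynomials becomes cyclic convolution, and `ν ↦ ν̄` becomes negation of the index followed by the
Frobenius `a ↦ a²`. Since the Hermitian form is semilinear in its second argument and squaring is an
involution on `F₄`, multiplication by `ν̄` is therefore adjoint to multiplication by `ν`:
`⟨[p]ₙ, [ν̄ q]ₙ⟩ = ⟨[ν p]ₙ, [q]ₙ⟩`. Moving `ν̄` across in the second component of the pairing and
adding the two components gives the factor `ν + ν̄`.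
-/

theorem F4.pow_four (a : F4) : a ^ 4 = a := by
  have : Fintype F4 := Fintype.ofFinite F4
  have card_eq : Fintype.card F4 = 4 := by
    rw [Fintype.card_eq_nat_card, GaloisField.card 2 2 two_ne_zero]
    norm_num
  simpa only [card_eq] using FiniteField.pow_card a

section HermInner

variable {m : ℕ} (u v w : Fin m → F4)

theorem hermInner_add_left : hermInner (u + v) w = hermInner u w + hermInner v w := by
  simp only [hermInner, Pi.add_apply, add_mul, Finset.sum_add_distrib]

theorem hermInner_neg_left : hermInner (-u) v = -hermInner u v := by
  simp only [hermInner, Pi.neg_apply, neg_mul, Finset.sum_neg_distrib]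

theorem hermInner_neg_right : hermInner u (-v) = -hermInner u v :=
  map_neg (AddMonoidHom.mk' (hermInner u) (hermInner_add_right u)) v

end HermInner

section CoeffVec

theorem coeffVec_add (n : ℕ) (p q : F4[X]) :
    coeffVec n (p + q) = coeffVec n p + coeffVec n q := by
  ext i
  simp only [coeffVec, Polynomial.add_mod, coeff_add, Pi.add_apply]

/-- The map `p ↦ [p]ₙ` of `coeffVec` as a homomorphism of additive groups. -/
def coeffVecHom (n : ℕ) : F4[X] →+ (Fin n → F4) :=
  AddMonoidHom.mk' (coeffVec n) (coeffVec_add n)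

theorem coeffVec_neg (n : ℕ) (p : F4[X]) : coeffVec n (-p) = -coeffVec n p :=
  map_neg (coeffVecHom n) p

theorem coeffVec_sum {ι : Type*} (n : ℕ) (s : Finset ι) (f : ι → F4[X]) :
    coeffVec n (∑ i ∈ s, f i) = ∑ i ∈ s, coeffVec n (f i) :=
  map_sum (coeffVecHom n) f s

theorem X_pow_sub_one_dvd_monomial_sub_monomial_mod {R : Type*} [Ring R] (n k : ℕ) (a : R) :
    X ^ n - 1 ∣ monomial k a - monomial (k % n) a := by
  have factor : monomial k a - monomial (k % n) a =
      (X ^ (n * (k / n)) - 1) * monomial (k % n) a := by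
    rw [sub_mul, one_mul, X_pow_mul_monomial, Nat.mod_add_div]
  rw [factor]
  exact (pow_one_sub_dvd_pow_mul_sub_one X n (k / n)).mul_right _

variable {n : ℕ} [NeZero n]

theorem monomial_mod_X_pow_sub_one {K : Type*} [Field K] (k : ℕ) (a : K) :
    monomial k a % (X ^ n - 1) = monomial (k % n) a := by
  have degree_modulus : (X ^ n - 1 : K[X]).degree = n := degree_X_pow_sub_C (NeZero.pos n) 1
  have modulus_ne_zero : (X ^ n - 1 : K[X]) ≠ 0 := (monic_X_pow_sub_C 1 (NeZero.ne n)).ne_zero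
  rw [mod_eq_of_dvd_sub (X_pow_sub_one_dvd_monomial_sub_monomial_mod n k a),
    mod_eq_self_iff modulus_ne_zero, degree_modulus]
  exact (degree_monomial_le _ a).trans_lt (Nat.cast_lt.2 (Nat.mod_lt k (NeZero.pos n)))

-- Casts `ℕ → Fin n` reduce modulo `n`, so index arithmetic below is cyclic.
open scoped Fin.NatCast

theorem coeffVec_monomial (k : ℕ) (a : F4) :
    coeffVec n (monomial k a) = Pi.single (k : Fin n) a := by
  ext i
  simp only [coeffVec, monomial_mod_X_pow_sub_one, coeff_monomial, Pi.single_apply, Fin.ext_iff,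
    Fin.val_natCast, eq_comm]

theorem coeffVec_mul_apply (p q : F4[X]) (j : Fin n) :
    coeffVec n (p * q) j = ∑ i, coeffVec n p i * coeffVec n q (j - i) := by
  induction p using Polynomial.induction_on' with
  | add p₁ p₂ h₁ h₂ =>
    simp only [add_mul, coeffVec_add, Pi.add_apply, h₁, h₂, Finset.sum_add_distrib]
  | monomial k a =>
    induction q using Polynomial.induction_on' with
    | add q₁ q₂ h₁ h₂ =>
      simp only [mul_add, coeffVec_add, Pi.add_apply, h₁, h₂, Finset.sum_add_distrib]
    | monomial l b =>
      simp only [monomial_mul_monomial, coeffVec_monomial, Pi.single_apply, Nat.cast_add, ite_mul,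
        zero_mul, Finset.sum_ite_eq', Finset.mem_univ, if_true]
      simp only [mul_ite, mul_zero, sub_eq_iff_eq_add']

theorem coeffVec_conjT (f : F4[X]) :
    coeffVec n (conjT n f) = ∑ i, Pi.single (-i) (coeffVec n f i ^ 2) := by
  have to_range : coeffVec n (conjT n f) = ∑ i ∈ Finset.range n,
      Pi.single (-(i : Fin n)) ((f % (X ^ n - 1)).coeff i ^ 2) := by
    rw [Finset.range_eq_Ico, Finset.sum_eq_sum_Ico_succ_bot (NeZero.pos n), conjT, coeffVec_add,
      coeffVec_sum, ← monomial_zero_left, coeffVec_monomial]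
    simp only [Nat.cast_zero, neg_zero, zero_add]
    congr 1
    refine Finset.sum_congr rfl fun i hi => ?_
    have cast_sub : ((n - i : ℕ) : Fin n) = -(i : Fin n) := by
      rw [eq_neg_iff_add_eq_zero, ← Nat.cast_add, Nat.sub_add_cancel (Finset.mem_Ico.1 hi).2.le,
        Fin.natCast_self]
    rw [C_mul_X_pow_eq_monomial, coeffVec_monomial, cast_sub]
  rw [to_range, Finset.sum_range]
  simp only [Fin.cast_val_eq_self, coeffVec]

theorem coeffVec_conjT_apply (f : F4[X]) (j : Fin n) :
    coeffVec n (conjT n f) j = coeffVec n f (-j) ^ 2 := by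
  simp only [coeffVec_conjT, Finset.sum_apply, Pi.single_apply, eq_neg_iff_add_eq_zero,
    ← neg_eq_iff_add_eq_zero, Finset.sum_ite_eq, Finset.mem_univ, if_true]

end CoeffVec

theorem hermInner_coeffVec_conjT_mul (n : ℕ) (ν p q : F4[X]) :
    hermInner (coeffVec n p) (coeffVec n (conjT n ν * q)) =
      hermInner (coeffVec n (ν * p)) (coeffVec n q) := by
  obtain rfl | _ := eq_zero_or_neZero n
  · simp only [hermInner, Finset.univ_eq_empty, Finset.sum_empty]
  have expand_left (j : Fin n) : coeffVec n p j * coeffVec n (conjT n ν * q) j ^ 2 =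
      ∑ k, coeffVec n p j * coeffVec n ν (k - j) * coeffVec n q k ^ 2 := by
    simp only [coeffVec_mul_apply, coeffVec_conjT_apply, sum_pow_char 2, mul_pow, ← pow_mul,
      Nat.reduceMul, F4.pow_four, Finset.mul_sum]
    rw [← (Equiv.subLeft j).sum_comp]
    simp only [Equiv.subLeft_apply, neg_sub, sub_sub_cancel, mul_assoc]
  have expand_right (k : Fin n) : coeffVec n (ν * p) k * coeffVec n q k ^ 2 =
      ∑ j, coeffVec n p j * coeffVec n ν (k - j) * coeffVec n q k ^ 2 := by
    rw [mul_comm ν, coeffVec_mul_apply, Finset.sum_mul]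
  simp only [hermInner, expand_left, expand_right]
  exact Finset.sum_comm

theorem herm_inner_generators_general (n : ℕ) (ν p q : F4[X]) :
    hermInner2 (coeffVec n (-conjT n ν * p), coeffVec n p)
        (coeffVec n q, coeffVec n (-conjT n ν * q)) =
      -hermInner (coeffVec n ((ν + conjT n ν) * p)) (coeffVec n q) :=
  calc
    _ = -hermInner (coeffVec n (conjT n ν * p)) (coeffVec n q) -
          hermInner (coeffVec n p) (coeffVec n (conjT n ν * q)) := by
      simp only [hermInner2, neg_mul, coeffVec_neg, hermInner_neg_left, hermInner_neg_right,
        sub_eq_add_neg]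
    _ = -(hermInner (coeffVec n (ν * p)) (coeffVec n q) +
          hermInner (coeffVec n (conjT n ν * p)) (coeffVec n q)) := by
      rw [hermInner_coeffVec_conjT_mul]
      ring
    _ = -hermInner (coeffVec n ((ν + conjT n ν) * p)) (coeffVec n q) := by
      rw [← hermInner_add_left, ← coeffVec_add, ← add_mul]

/-- Key computation for Theorem 2: the Hermitian inner product of the two types of
generators of `D` reduces to `-⟨[c·(ν+ν̄)·g₁^{⊥h}]ₙ, [s·g₂^{⊥h}]ₙ⟩_h`. -/
theorem herm_inner_generators (n : ℕ) (hn : Odd n) (g₁ g₂ ν : Polynomial F4)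
    (hg₁m : g₁.Monic) (hg₁d : g₁ ∣ X ^ n - 1)
    (hg₂m : g₂.Monic) (hg₂d : g₂ ∣ X ^ n - 1) :
    ∀ c s : Polynomial F4,
      hermInner2
        (coeffVec n (-(conjT n ν) * c * dualGen n g₁), coeffVec n (c * dualGen n g₁))
        (coeffVec n (s * dualGen n g₂), coeffVec n (-(conjT n ν) * s * dualGen n g₂)) =
      -(hermInner (coeffVec n (c * (ν + conjT n ν) * dualGen n g₁))
          (coeffVec n (s * dualGen n g₂))) := by
  intro c s
  rw [mul_assoc _ c, mul_assoc _ s, mul_comm c (ν + _), mul_assoc (ν + _)]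
  exact herm_inner_generators_general n ν (c * dualGen n g₁) (s * dualGen n g₂)

end
end
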